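/- Let b > 0 and define k(x) = exp(−|x|^(−b)) for real x ≠ 0. Then there exists δ ∈ (0,1) such that for every real x with 0 < |x| < δ, one has (k'(x))² ≤ 2·k(x)·k''(x). -/

import Mathlib

/-- The function `k(x) = exp(-|x|^(-b))`, defined (with junk value elsewhere) on `ℝ`. -/
noncomputable def expWeight (b : ℝ) (x : ℝ) : ℝ := Real.exp (-|x| ^ (-b))

/-!
Write `k = exp ∘ g`. Then `k' = g' k` and `k'' = (g'² + g'') k`, so `k'² ≤ C k k''` says exactly
that `g'² ≤ C (g'² + g'')`. For `g = -|x|^(-b)` one has `g'² = b² |x|^(-2b-2)` and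
`g'' = -b (b + 1) |x|^(-b-2)`, so `g''` is smaller than `g'²` by a factor `|x|^b`, which tends to
`0` with `x` when `b > 0`; any constant `C > 1` therefore suffices. For `-1 ≤ b ≤ 0` already
`g'' ≥ 0`.
-/

open Filter Topology

section ExpComp

variable {g g' : ℝ → ℝ} {g'' x : ℝ}

theorem deriv_deriv_exp_comp (hg : ∀ᶠ y in 𝓝 x, HasDerivAt g (g' y) y)
    (hg' : HasDerivAt g' g'' x) :
    deriv (deriv fun y ↦ Real.exp (g y)) x = Real.exp (g x) * (g' x ^ 2 + g'') := by
  have deriv_eq : deriv (fun y ↦ Real.exp (g y)) =ᶠ[𝓝 x] fun y ↦ Real.exp (g y) * g' y :=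
    hg.mono fun y hy ↦ hy.exp.deriv
  rw [deriv_eq.deriv_eq, (hg.self_of_nhds.exp.fun_mul hg').deriv]
  ring

theorem sq_deriv_exp_comp_le_iff {C : ℝ} (hg : ∀ᶠ y in 𝓝 x, HasDerivAt g (g' y) y)
    (hg' : HasDerivAt g' g'' x) :
    deriv (fun y ↦ Real.exp (g y)) x ^ 2 ≤
        C * Real.exp (g x) * deriv (deriv fun y ↦ Real.exp (g y)) x ↔
      g' x ^ 2 ≤ C * (g' x ^ 2 + g'') := by
  rw [hg.self_of_nhds.exp.deriv, deriv_deriv_exp_comp hg hg', mul_pow,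
    show C * Real.exp (g x) * (Real.exp (g x) * (g' x ^ 2 + g'')) =
      Real.exp (g x) ^ 2 * (C * (g' x ^ 2 + g'')) by ring]
  exact mul_le_mul_iff_right₀ (by positivity)

end ExpComp

section AbsRpow

variable {x : ℝ}

theorem hasDerivAt_abs_rpow_of_ne_zero (p : ℝ) (hx : x ≠ 0) :
    HasDerivAt (fun y ↦ |y| ^ p) (p * |x| ^ (p - 2) * x) x := by
  have x_abs_pos : 0 < |x| := abs_pos.mpr hx
  have rpow_split : |x| ^ (p - 1) = |x| ^ (p - 2) * |x| := by
    rw [← Real.rpow_add_one x_abs_pos.ne']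
    ring_nf
  convert (hasDerivAt_abs hx).rpow_const (p := p) (Or.inl x_abs_pos.ne') using 1
  rw [rpow_split]
  linear_combination (-p * |x| ^ (p - 2)) * sign_mul_abs x

theorem hasDerivAt_abs_rpow_mul_self (p : ℝ) (hx : x ≠ 0) :
    HasDerivAt (fun y ↦ |y| ^ p * y) ((p + 1) * |x| ^ p) x := by
  have rpow_split : |x| ^ p = |x| ^ (p - 2) * x ^ 2 := by
    rw [← sq_abs, ← Real.rpow_add_natCast (abs_ne_zero.mpr hx)]
    norm_num
  refine ((hasDerivAt_abs_rpow_of_ne_zero p hx).fun_mul (hasDerivAt_id' x)).congr_deriv ?_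
  linear_combination -p * rpow_split

end AbsRpow

section ExpWeight

variable {b C x : ℝ}

theorem sq_deriv_expWeight_le_iff (hx : x ≠ 0) :
    deriv (expWeight b) x ^ 2 ≤ C * expWeight b x * deriv (deriv (expWeight b)) x ↔
      C * (b * (b + 1)) * |x| ^ b ≤ (C - 1) * b ^ 2 := by
  have exponent_deriv : ∀ᶠ y in 𝓝 x,
      HasDerivAt (fun z ↦ -|z| ^ (-b)) (b * (|y| ^ (-b - 2) * y)) y := by
    filter_upwards [eventually_ne_nhds hx] with y hy
    exact (hasDerivAt_abs_rpow_of_ne_zero (-b) hy).fun_neg.congr_deriv (by ring)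
  have exponent_deriv_deriv :
      HasDerivAt (fun y ↦ b * (|y| ^ (-b - 2) * y)) (b * ((-b - 2 + 1) * |x| ^ (-b - 2))) x :=
    (hasDerivAt_abs_rpow_mul_self (-b - 2) hx).const_mul b
  have x_abs_pos : 0 < |x| := abs_pos.mpr hx
  have rpow_split : |x| ^ (-b - 2) = (|x| ^ (-b - 2) * x) ^ 2 * |x| ^ b := by
    rw [mul_pow, ← sq_abs x, ← Real.rpow_natCast, ← Real.rpow_natCast, ← Real.rpow_mul x_abs_pos.le,
      ← Real.rpow_add x_abs_pos, ← Real.rpow_add x_abs_pos]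
    push_cast
    ring_nf
  have factor_pos : 0 < (|x| ^ (-b - 2) * x) ^ 2 := by positivity
  have gap_eq : C * ((b * (|x| ^ (-b - 2) * x)) ^ 2 + b * ((-b - 2 + 1) * |x| ^ (-b - 2))) -
      (b * (|x| ^ (-b - 2) * x)) ^ 2 =
        (|x| ^ (-b - 2) * x) ^ 2 * ((C - 1) * b ^ 2 - C * (b * (b + 1)) * |x| ^ b) := by
    linear_combination (-C * b * (b + 1)) * rpow_split
  refine (sq_deriv_exp_comp_le_iff exponent_deriv exponent_deriv_deriv).trans ?_
  rw [← sub_nonneg, gap_eq, mul_nonneg_iff_of_pos_left factor_pos, sub_nonneg]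

theorem eventually_mul_abs_rpow_le (hb : -1 ≤ b) (hC : 1 < C) :
    ∀ᶠ x in 𝓝 (0 : ℝ), C * (b * (b + 1)) * |x| ^ b ≤ (C - 1) * b ^ 2 := by
  rcases le_or_gt b 0 with b_nonpos | b_pos
  · refine .of_forall fun x ↦ le_trans (b := 0) ?_ (mul_nonneg (by linarith) (sq_nonneg b))
    have coeff_nonpos : C * (b * (b + 1)) ≤ 0 :=
      mul_nonpos_of_nonneg_of_nonpos (by linarith)
        (mul_nonpos_of_nonpos_of_nonneg b_nonpos (by linarith))
    exact mul_nonpos_of_nonpos_of_nonneg coeff_nonpos (by positivity)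
  · have tendsto_zero : Tendsto (fun x : ℝ ↦ C * (b * (b + 1)) * |x| ^ b) (𝓝 0) (𝓝 0) := by
      have cont : Continuous fun x : ℝ ↦ C * (b * (b + 1)) * |x| ^ b :=
        (continuous_abs.rpow_const fun _ ↦ Or.inr b_pos.le).const_mul _
      simpa [b_pos.ne'] using cont.tendsto 0
    have bound_pos : 0 < (C - 1) * b ^ 2 := mul_pos (by linarith) (by positivity)
    exact tendsto_zero.eventually_le_const bound_pos

end ExpWeight

theorem expWeight_self_bounded_gradient_general {b C : ℝ} (hb : -1 ≤ b) (hC : 1 < C) :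
    ∃ δ : ℝ, 0 < δ ∧ δ < 1 ∧ ∀ x : ℝ, x ≠ 0 → |x| < δ →
      deriv (expWeight b) x ^ 2 ≤ C * expWeight b x * deriv (deriv (expWeight b)) x := by
  obtain ⟨ε, ε_pos, bound⟩ := Metric.eventually_nhds_iff.mp (eventually_mul_abs_rpow_le hb hC)
  refine ⟨min ε (1 / 2), by positivity, (min_le_right _ _).trans_lt (by norm_num),
    fun x hx x_lt ↦ (sq_deriv_expWeight_le_iff hx).mpr (bound ?_)⟩
  rw [Real.dist_0_eq_abs]
  exact x_lt.trans_le (min_le_left _ _)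

/-- For `b > 0`, near `0` (and away from `0`) one has the self-bounded-gradient inequality
`(k'(x))² ≤ 2 k(x) k''(x)`. -/
theorem expWeight_self_bounded_gradient (b : ℝ) (hb : 0 < b) :
    ∃ δ : ℝ, 0 < δ ∧ δ < 1 ∧ ∀ x : ℝ, x ≠ 0 → |x| < δ →
      (deriv (expWeight b) x) ^ 2 ≤ 2 * expWeight b x * deriv (deriv (expWeight b)) x :=
  expWeight_self_bounded_gradient_general (by linarith) one_lt_two
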